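/- Let T=(V,E) be a leafless directed tree with a root, let 1 < q < ∞, let λ be the constant sequence λ_v = 1 for each v ∈ V, and assume the backward shift B is bounded on L^q(T,λ). If the tree T has no free end, then B is hypercyclic. -/

import Mathlib

open Filter

attribute [local instance] Classical.propDecidable
open scoped ENNReal

/-- A directed tree: a locally finite directed graph on a (countably infinite)
vertex set with no directed circuits, whose underlying undirected graph is
connected, and in which every vertex has indegree at most one. -/
structure DirTree (V : Type) where
  E : V → V → Prop
  finIn : ∀ v : V, {u : V | E u v}.Finite
  finOut : ∀ v : V, {u : V | E v u}.Finite
  noCircuit : ∀ (n : ℕ) (c : Fin (n + 1) → V), Function.Injective c →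
    (∀ i : Fin n, E (c i.castSucc) (c i.succ)) → ¬ E (c (Fin.last n)) (c 0)
  conn : (SimpleGraph.fromRel E).Connected
  indeg : ∀ ⦃u w v : V⦄, E u v → E w v → u = w

namespace DirTree

variable {V : Type} (T : DirTree V)

/-- A root is a vertex of indegree zero. -/
def IsRoot (r : V) : Prop := ∀ u : V, ¬ T.E u r

/-- The set of children of a vertex. -/
def child (u : V) : Set V := {v : V | T.E u v}

/-- A leaf is a vertex of outdegree zero. -/
def IsLeaf (u : V) : Prop := ¬ (T.child u).Nonempty

/-- The (forward) shift `(S f)(v) = f (parent v)`, with `(S f)(root) = 0`. -/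
noncomputable def shift (f : V → ℂ) (v : V) : ℂ :=
  if h : ∃ u : V, T.E u v then f h.choose else 0

/-- The backward shift `(B f)(u) = ∑_{v ∈ child u} f v`. -/
noncomputable def bwd (f : V → ℂ) (u : V) : ℂ :=
  ∑' v : T.child u, f v.1

/-- The operator `(S* g)(u) = ∑_{v ∈ child u} g v · λ_v / λ_u`. -/
noncomputable def sstar (lam : V → ℝ) (g : V → ℂ) (u : V) : ℂ :=
  ∑' v : T.child u, g v.1 * ((lam v.1 / lam u : ℝ) : ℂ)

/-- `childN n u` is the set of vertices `v` with `parentⁿ v = u`. -/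
def childN (T : DirTree V) : ℕ → V → Set V
  | 0, u => {u}
  | n + 1, u => {w : V | ∃ v ∈ T.child u, w ∈ childN T n v}

/-- `γ(u,n)`, the cardinality of `childN n u`. -/
noncomputable def gam (u : V) (n : ℕ) : ℕ := (T.childN n u).ncard

/-- The `n`-th ancestor `parentⁿ u` of `u` (junk value `u` if it does not exist). -/
noncomputable def anc (u : V) (n : ℕ) : V :=
  if h : ∃ w : V, u ∈ T.childN n w then h.choose else u

/-- A leafless directed tree has a free end if some vertex is such that all of
its descendants have outdegree one. -/
def FreeEnd : Prop :=
  ∃ w : V, ∀ n : ℕ, 0 < n → ∀ v ∈ T.childN n w, (T.child v).ncard = 1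

end DirTree

/-- Membership in the weighted space `L^p(T,λ)`. -/
def MemLp' {V : Type} (lam : V → ℝ) (p : ℝ) (f : V → ℂ) : Prop :=
  Summable (fun v => ‖f v‖ ^ p * lam v)

/-- The norm of the weighted space `L^p(T,λ)`. -/
noncomputable def pNorm {V : Type} (lam : V → ℝ) (p : ℝ) (f : V → ℂ) : ℝ :=
  (∑' v, ‖f v‖ ^ p * lam v) ^ (1 / p)

/-- Boundedness of an operator on `L^p(T,λ)`. -/
def BoundedOn {V : Type} (lam : V → ℝ) (p : ℝ) (A : (V → ℂ) → (V → ℂ)) : Prop :=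
  ∃ C : ℝ, 0 ≤ C ∧ ∀ f : V → ℂ, MemLp' lam p f →
    MemLp' lam p (A f) ∧ pNorm lam p (A f) ≤ C * pNorm lam p f

/-- Hypercyclicity of an operator on `L^p(T,λ)`: some `f ∈ L^p(T,λ)` has dense
orbit `{Aⁿ f : n ∈ ℕ}`. -/
def Hypercyclic {V : Type} (lam : V → ℝ) (p : ℝ) (A : (V → ℂ) → (V → ℂ)) : Prop :=
  ∃ f : V → ℂ, MemLp' lam p f ∧ ∀ g : V → ℂ, MemLp' lam p g → ∀ ε : ℝ, 0 < ε →
    ∃ n : ℕ, MemLp' lam p (A^[n] f - g) ∧ pNorm lam p (A^[n] f - g) < ε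

/-!
The vectors `Pi.single v a` span a dense subspace, and `B` maps `Pi.single v a` to
`Pi.single u a` when `u` is the parent of `v`, and to `0` when `v` is the root. Since every vertex
lies at finite distance from the root, `Bⁿ` kills each `Pi.single v a` eventually. Conversely,
spreading the mass `a` evenly over the `γ(v, n)` descendants of `v` in generation `n` gives a vector
that `Bⁿ` maps to `Pi.single v a` and whose norm is `γ(v, n) ^ (1 / q - 1) * ‖a‖`. Without free ends
`γ(v, n) → ∞`, so for `q > 1` these approximate preimages tend to `0`, and the hypercyclicity
criterion (a Baire category argument) applies.
-/

open Set Topology TopologicalSpace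
open scoped Finset

section HypercyclicityCriterion

theorem exists_denseRange_of_forall_isOpen {ι X Y : Type*} [TopologicalSpace X] [BaireSpace X]
    [Nonempty X] [TopologicalSpace Y] [SecondCountableTopology Y] {f : ι → X → Y}
    (hf : ∀ i, Continuous (f i))
    (htrans : ∀ U : Set X, IsOpen U → U.Nonempty → ∀ W : Set Y, IsOpen W → W.Nonempty →
      ∃ i, (U ∩ f i ⁻¹' W).Nonempty) :
    ∃ x, DenseRange fun i => f i x := by
  have hdense : Dense (⋂ W ∈ countableBasis Y, ⋃ i, f i ⁻¹' W) := by
    refine dense_biInter_of_isOpen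
      (fun W hW => isOpen_iUnion fun i => (isOpen_of_mem_countableBasis hW).preimage (hf i))
      (countable_countableBasis Y) fun W hW => ?_
    rw [dense_iff_inter_open]
    intro U hU hU_nonempty
    obtain ⟨i, x, hxU, hxW⟩ := htrans U hU hU_nonempty W (isOpen_of_mem_countableBasis hW)
      (nonempty_of_mem_countableBasis hW)
    exact ⟨x, hxU, mem_iUnion_of_mem i hxW⟩
  obtain ⟨x, hx⟩ := hdense.nonempty
  refine ⟨x, (isBasis_countableBasis Y).dense_iff.2 fun W hW _ => ?_⟩
  obtain ⟨i, hi⟩ := mem_iUnion.1 (mem_iInter₂.1 hx W hW)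
  exact ⟨f i x, hi, mem_range_self i⟩

variable {ι R X Y : Type*} [Semiring R]
  [AddCommMonoid X] [Module R X] [TopologicalSpace X]
  [AddCommMonoid Y] [Module R Y] [TopologicalSpace Y] [ContinuousAdd Y] [ContinuousConstSMul R Y]
  {l : Filter ι} {A : ι → X →L[R] Y}

theorem tendsto_zero_of_mem_span {S : Set X} (hS : ∀ x ∈ S, Tendsto (fun i => A i x) l (𝓝 0))
    {x : X} (hx : x ∈ Submodule.span R S) : Tendsto (fun i => A i x) l (𝓝 0) := by
  induction hx using Submodule.span_induction with
  | mem x hx => exact hS x hx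
  | zero => simpa using tendsto_const_nhds
  | add x y _ _ hx hy => simpa using hx.add hy
  | smul a x _ hx => simpa using hx.const_smul a

variable [ContinuousAdd X] [ContinuousConstSMul R X]

theorem exists_tendsto_zero_of_mem_span {S : Set Y}
    (hS : ∀ y ∈ S, ∃ u : ι → X, Tendsto u l (𝓝 0) ∧ Tendsto (fun i => A i (u i)) l (𝓝 y))
    {y : Y} (hy : y ∈ Submodule.span R S) :
    ∃ u : ι → X, Tendsto u l (𝓝 0) ∧ Tendsto (fun i => A i (u i)) l (𝓝 y) := by
  induction hy using Submodule.span_induction with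
  | mem y hy => exact hS y hy
  | zero => exact ⟨fun _ => 0, tendsto_const_nhds, by simpa using tendsto_const_nhds⟩
  | add y z _ _ hy hz =>
    obtain ⟨u, hu, hAu⟩ := hy
    obtain ⟨w, hw, hAw⟩ := hz
    exact ⟨fun i => u i + w i, by simpa using hu.add hw, by simpa using hAu.add hAw⟩
  | smul a y _ hy =>
    obtain ⟨u, hu, hAu⟩ := hy
    exact ⟨fun i => a • u i, by simpa using hu.const_smul a, by simpa using hAu.const_smul a⟩

theorem exists_denseRange_of_tendsto_zero [BaireSpace X] [SecondCountableTopology Y] [l.NeBot]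
    {S : Set X} {S' : Set Y} (hS_dense : Dense (Submodule.span R S : Set X))
    (hS'_dense : Dense (Submodule.span R S' : Set Y))
    (hS : ∀ x ∈ S, Tendsto (fun i => A i x) l (𝓝 0))
    (hS' : ∀ y ∈ S', ∃ u : ι → X, Tendsto u l (𝓝 0) ∧ Tendsto (fun i => A i (u i)) l (𝓝 y)) :
    ∃ x, DenseRange fun i => A i x := by
  refine exists_denseRange_of_forall_isOpen (fun i => (A i).continuous)
    fun U hU hU_nonempty W hW hW_nonempty => ?_
  obtain ⟨x, hxU, hx⟩ := hS_dense.inter_open_nonempty U hU hU_nonempty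
  obtain ⟨y, hyW, hy⟩ := hS'_dense.inter_open_nonempty W hW hW_nonempty
  obtain ⟨u, hu, hAu⟩ := exists_tendsto_zero_of_mem_span hS' hy
  have hx_add : Tendsto (fun i => x + u i) l (𝓝 x) := by simpa using hu.const_add x
  have hA_add : Tendsto (fun i => A i (x + u i)) l (𝓝 y) := by
    simpa using (tendsto_zero_of_mem_span hS hx).add hAu
  obtain ⟨i, hiU, hiW⟩ := ((hx_add.eventually_mem (hU.mem_nhds hxU)).and
    (hA_add.eventually_mem (hW.mem_nhds hyW))).exists
  exact ⟨i, x + u i, hiU, hiW⟩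

end HypercyclicityCriterion

section LpSpace

variable {α : Type*} {p : ℝ≥0∞}

section Density

variable {E : α → Type*} [∀ i, NormedAddCommGroup (E i)] [Fact (1 ≤ p)]

theorem dense_span_iUnion_range_lpSingle [DecidableEq α] (R : Type*) [Semiring R]
    [Module R (lp E p)] (hp : p ≠ ⊤) :
    Dense (Submodule.span R (⋃ i, range (lp.single (E := E) p i)) : Set (lp E p)) := fun f =>
  mem_closure_of_tendsto (lp.hasSum_single hp f) <| .of_forall fun _ =>
    Submodule.sum_mem _ fun i _ => Submodule.subset_span <| mem_iUnion_of_mem i (mem_range_self _)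

theorem separableSpace_lp [Countable α] [∀ i, SeparableSpace (E i)] (hp : p ≠ ⊤) :
    SeparableSpace (lp E p) := by
  classical
  have hspan : IsSeparable
      (Submodule.span ℤ (⋃ i, range (lp.single (E := E) p i)) : Set (lp E p)) :=
    (IsSeparable.iUnion fun i =>
      isSeparable_range (lp.isometry_single (E := E) (p := p) i).continuous).span
  rw [← isSeparable_univ_iff, ← (dense_span_iUnion_range_lpSingle ℤ hp).closure_eq]
  exact hspan.closure

end Density

section Average

variable [DecidableEq α] {E : Type*} [NormedAddCommGroup E]

theorem norm_sum_lpSingle_const [Fact (1 ≤ p)] (hp : 0 < p.toReal) (s : Finset α) (a : E) :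
    ‖(∑ i ∈ s, lp.single p i a : lp (fun _ : α => E) p)‖ = (#s : ℝ) ^ p.toReal⁻¹ * ‖a‖ := by
  rw [← Real.rpow_left_inj (norm_nonneg _) (by positivity) hp.ne',
    lp.norm_sum_single hp (fun _ => a), Real.mul_rpow (by positivity) (norm_nonneg a),
    Real.rpow_inv_rpow (by positivity) hp.ne', Finset.sum_const, nsmul_eq_mul]

variable [NormedSpace ℝ E]

/-- The vector of `ℓᵖ` that spreads the mass `a` evenly over the finite set `s`
(and is `0` when `s = ∅`). -/
noncomputable def lpAverage (p : ℝ≥0∞) (s : Finset α) (a : E) : lp (fun _ : α => E) p :=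
  (#s : ℝ)⁻¹ • ∑ i ∈ s, lp.single p i a

theorem norm_lpAverage [Fact (1 ≤ p)] (hp : 1 < p.toReal) (s : Finset α) (a : E) :
    ‖lpAverage p s a‖ = (#s : ℝ) ^ (-(1 - p.toReal⁻¹)) * ‖a‖ := by
  have hexp : p.toReal⁻¹ - 1 ≠ 0 := (sub_neg.2 (inv_lt_one_of_one_lt₀ hp)).ne
  rw [lpAverage, norm_smul, norm_sum_lpSingle_const (by linarith), neg_sub,
    Real.rpow_sub_one' (by positivity) hexp, Real.norm_of_nonneg (by positivity)]
  ring

theorem tendsto_lpAverage_zero {ι : Type*} {l : Filter ι} {s : ι → Finset α} [Fact (1 ≤ p)]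
    (hp : 1 < p.toReal) (hs : Tendsto (fun i => #(s i)) l atTop) (a : E) :
    Tendsto (fun i => lpAverage p (s i) a) l (𝓝 0) := by
  rw [tendsto_zero_iff_norm_tendsto_zero]
  simp_rw [norm_lpAverage hp]
  have hexp : 0 < 1 - p.toReal⁻¹ := sub_pos.2 (inv_lt_one_of_one_lt₀ hp)
  simpa using ((tendsto_rpow_neg_atTop hexp).comp (tendsto_natCast_atTop_atTop.comp hs)).mul_const
    ‖a‖

end Average

end LpSpace

section LpOperator

variable {V : Type} {p : ℝ≥0∞}

theorem memLp'_one_iff_memℓp (hp : 0 < p.toReal) {f : V → ℂ} :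
    MemLp' (fun _ => 1) p.toReal f ↔ Memℓp f p := by
  simp [MemLp', memℓp_gen_iff hp]

theorem pNorm_one_eq_norm (hp : 0 < p.toReal) (f : lp (fun _ : V => ℂ) p) :
    pNorm (fun _ => 1) p.toReal f = ‖f‖ := by
  simp [pNorm, lp.norm_eq_tsum_rpow hp]

namespace BoundedOn

variable [Fact (1 ≤ p)] {L : (V → ℂ) →ₗ[ℂ] V → ℂ}

/-- The continuous operator on `ℓᵖ(V)` induced by a linear operator on functions that is bounded
on the unweighted space `L^p`. -/
noncomputable def toCLM (hL : BoundedOn (fun _ => 1) p.toReal L) (hp : 0 < p.toReal) :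
    lp (fun _ : V => ℂ) p →L[ℂ] lp (fun _ : V => ℂ) p :=
  LinearMap.mkContinuousOfExistsBound
    { toFun f := ⟨L f, by
        obtain ⟨_, _, hbound⟩ := hL
        exact (memLp'_one_iff_memℓp hp).1 (hbound f ((memLp'_one_iff_memℓp hp).2 f.2)).1⟩
      map_add' f g := lp.ext (map_add L (f : V → ℂ) g)
      map_smul' c f := lp.ext (map_smul L c (f : V → ℂ)) } <| by
    obtain ⟨C, _, hbound⟩ := hL
    refine ⟨C, fun f => ?_⟩
    rw [← pNorm_one_eq_norm hp, ← pNorm_one_eq_norm hp]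
    exact (hbound f ((memLp'_one_iff_memℓp hp).2 f.2)).2

variable (hL : BoundedOn (fun _ => 1) p.toReal L) (hp : 0 < p.toReal)

theorem coe_toCLM (f : lp (fun _ : V => ℂ) p) : (hL.toCLM hp f : V → ℂ) = L f := rfl

theorem coe_toCLM_pow (n : ℕ) (f : lp (fun _ : V => ℂ) p) :
    ((hL.toCLM hp ^ n) f : V → ℂ) = L^[n] f := by
  rw [hom_coe_pow (fun A : lp (fun _ : V => ℂ) p →L[ℂ] lp (fun _ : V => ℂ) p => ⇑A) rfl
    (fun _ _ => rfl)]
  exact Function.Semiconj.iterate_right (f := fun f : lp (fun _ : V => ℂ) p => (f : V → ℂ))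
    (hL.coe_toCLM hp) n f

variable {hL hp} in
theorem hypercyclic_of_denseRange {x : lp (fun _ : V => ℂ) p}
    (hx : DenseRange fun n : ℕ => (hL.toCLM hp ^ n) x) :
    Hypercyclic (fun _ => 1) p.toReal L := by
  refine ⟨x, (memLp'_one_iff_memℓp hp).2 x.2, fun g hg ε hε => ?_⟩
  let y : lp (fun _ : V => ℂ) p := ⟨g, (memLp'_one_iff_memℓp hp).1 hg⟩
  obtain ⟨n, hn⟩ := hx.exists_dist_lt y hε
  have hcoe : L^[n] x - g = ((hL.toCLM hp ^ n) x - y : lp (fun _ : V => ℂ) p) := by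
    rw [← coe_toCLM_pow hL hp]
    rfl
  refine ⟨n, ?_, ?_⟩
  · rw [hcoe, memLp'_one_iff_memℓp hp]
    exact lp.memℓp _
  · rwa [hcoe, pNorm_one_eq_norm hp, ← dist_eq_norm, dist_comm]

end BoundedOn

end LpOperator

namespace DirTree

variable {V : Type} (T : DirTree V)

section Generations

theorem mem_childN_add {m n : ℕ} {u w : V} :
    w ∈ T.childN (m + n) u ↔ ∃ v ∈ T.childN m u, w ∈ T.childN n v := by
  induction m generalizing u with
  | zero => simp [childN]
  | succ m ih =>
    rw [Nat.succ_add]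
    simp only [childN, mem_ofPred_eq, ih]
    tauto

theorem mem_childN_succ {n : ℕ} {u w : V} :
    w ∈ T.childN (n + 1) u ↔ ∃ v ∈ T.childN n u, T.E v w := by
  rw [mem_childN_add]
  simp [childN, child]

theorem childN_finite (n : ℕ) (u : V) : (T.childN n u).Finite := by
  induction n with
  | zero => exact finite_singleton u
  | succ n ih =>
    refine (ih.biUnion fun v _ => T.finOut v).subset fun w hw => ?_
    simpa using T.mem_childN_succ.1 hw

/-- The `n`-th generation below `u`, i.e. `childN n u`, as a finset. -/
noncomputable def childFinset (n : ℕ) (u : V) : Finset V := (T.childN_finite n u).toFinset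

@[simp]
theorem mem_childFinset {n : ℕ} {u w : V} : w ∈ T.childFinset n u ↔ w ∈ T.childN n u := by
  simp [childFinset]

theorem exists_mem_childN_of_isRoot {r : V} (hr : T.IsRoot r) (v : V) : ∃ n, v ∈ T.childN n r := by
  have hpath := (SimpleGraph.reachable_iff_reflTransGen r v).1 (T.conn.preconnected r v)
  induction hpath with
  | refl => exact ⟨0, rfl⟩
  | @tail v w _ hadj ih =>
    obtain ⟨n, hv⟩ := ih
    rcases hadj.2 with hvw | hwv
    · exact ⟨n + 1, T.mem_childN_succ.2 ⟨v, hv, hvw⟩⟩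
    · cases n with
      | zero => exact absurd (hv ▸ hwv) (hr w)
      | succ n =>
        obtain ⟨z, hz, hzv⟩ := T.mem_childN_succ.1 hv
        exact ⟨n, T.indeg hwv hzv ▸ hz⟩

theorem card_childFinset_succ (n : ℕ) (u : V) :
    #(T.childFinset (n + 1) u) = ∑ v ∈ T.childFinset n u, (T.child v).ncard := by
  have hunion : T.childFinset (n + 1) u =
      (T.childFinset n u).biUnion fun v => (T.finOut v).toFinset := by
    ext w
    simp [mem_childN_succ]
  have hdisj : (T.childFinset n u : Set V).PairwiseDisjoint fun v => (T.finOut v).toFinset :=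
    fun v _ w _ hvw => Finset.disjoint_left.2 fun x hxv hxw =>
      hvw (T.indeg (by simpa using hxv) (by simpa using hxw))
  rw [hunion, Finset.card_biUnion hdisj]
  exact Finset.sum_congr rfl fun v _ => (ncard_eq_toFinset_card _ (T.finOut v)).symm

variable {T}

theorem one_le_ncard_child (hleafless : ∀ u : V, ¬ T.IsLeaf u) (v : V) : 1 ≤ (T.child v).ncard :=
  (ncard_pos (T.finOut v)).2 (not_not.1 (hleafless v))

theorem childN_nonempty (hleafless : ∀ u : V, ¬ T.IsLeaf u) (n : ℕ) (u : V) :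
    (T.childN n u).Nonempty := by
  induction n with
  | zero => exact singleton_nonempty u
  | succ n ih =>
    obtain ⟨v, hv⟩ := ih
    obtain ⟨w, hw⟩ := not_not.1 (hleafless v)
    exact ⟨w, T.mem_childN_succ.2 ⟨v, hv, hw⟩⟩

theorem monotone_card_childFinset (hleafless : ∀ u : V, ¬ T.IsLeaf u) (u : V) :
    Monotone fun n => #(T.childFinset n u) := by
  refine monotone_nat_of_le_succ fun n => ?_
  rw [card_childFinset_succ, Finset.card_eq_sum_ones]
  exact Finset.sum_le_sum fun v _ => one_le_ncard_child hleafless v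

theorem card_childFinset_lt_succ (hleafless : ∀ u : V, ¬ T.IsLeaf u) {n : ℕ} {u v : V}
    (hv : v ∈ T.childN n u) (hchild : (T.child v).ncard ≠ 1) :
    #(T.childFinset n u) < #(T.childFinset (n + 1) u) := by
  rw [card_childFinset_succ, Finset.card_eq_sum_ones]
  exact Finset.sum_lt_sum (fun w _ => one_le_ncard_child hleafless w)
    ⟨v, T.mem_childFinset.2 hv, (one_le_ncard_child hleafless v).lt_of_ne' hchild⟩

theorem exists_card_childFinset_lt (hleafless : ∀ u : V, ¬ T.IsLeaf u) (hfree : ¬ T.FreeEnd)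
    (n : ℕ) (u : V) : ∃ m, #(T.childFinset n u) < #(T.childFinset m u) := by
  obtain ⟨w, hw⟩ := childN_nonempty hleafless n u
  simp only [FreeEnd, not_exists, not_forall] at hfree
  obtain ⟨k, _, v, hv, hchild⟩ := hfree w
  exact ⟨n + k + 1, (monotone_card_childFinset hleafless u (Nat.le_add_right n k)).trans_lt <|
    card_childFinset_lt_succ hleafless (T.mem_childN_add.2 ⟨w, hw, hv⟩) hchild⟩

theorem tendsto_card_childFinset_atTop (hleafless : ∀ u : V, ¬ T.IsLeaf u) (hfree : ¬ T.FreeEnd)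
    (u : V) : Tendsto (fun n => #(T.childFinset n u)) atTop atTop := by
  refine tendsto_atTop_atTop_of_monotone (monotone_card_childFinset hleafless u) fun N => ?_
  induction N with
  | zero => exact ⟨0, Nat.zero_le _⟩
  | succ N ih =>
    obtain ⟨n, hn⟩ := ih
    obtain ⟨m, hm⟩ := exists_card_childFinset_lt hleafless hfree n u
    exact ⟨m, by omega⟩

end Generations

section BackwardShift

theorem bwd_single_apply (u v : V) (a : ℂ) :
    T.bwd (Pi.single v a) u = if T.E u v then a else 0 := by
  rw [bwd, tsum_subtype (T.child u) (Pi.single v a), tsum_eq_single v]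
  · simp [indicator, child]
  · intro w hw
    simp [indicator, hw]

theorem bwd_single {u v : V} (huv : T.E u v) (a : ℂ) : T.bwd (Pi.single v a) = Pi.single u a := by
  funext w
  have hw : T.E w v ↔ w = u := ⟨fun hwv => T.indeg hwv huv, fun hwu => hwu ▸ huv⟩
  simp [bwd_single_apply, Pi.single_apply, hw]

theorem bwd_single_of_isRoot {r : V} (hr : T.IsRoot r) (a : ℂ) : T.bwd (Pi.single r a) = 0 := by
  funext w
  simp [bwd_single_apply, hr w]

theorem bwd_iterate_single {n : ℕ} {u w : V} (hw : w ∈ T.childN n u) (a : ℂ) :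
    T.bwd^[n] (Pi.single w a) = Pi.single u a := by
  induction n generalizing w with
  | zero => rw [mem_singleton_iff.1 hw, Function.iterate_zero_apply]
  | succ n ih =>
    obtain ⟨v, hv, hvw⟩ := T.mem_childN_succ.1 hw
    rw [Function.iterate_succ_apply, T.bwd_single hvw, ih hv]

/-- The backward shift as a linear map on all functions; the sum over the children is finite. -/
noncomputable def bwdLinearMap : (V → ℂ) →ₗ[ℂ] V → ℂ where
  toFun := T.bwd
  map_add' f g := by
    funext u
    have : Finite (T.child u) := T.finOut u
    exact Summable.tsum_add (Summable.of_finite (f := fun v : T.child u => f v))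
      (Summable.of_finite (f := fun v : T.child u => g v))
  map_smul' c f := by
    funext u
    exact tsum_mul_left

theorem coe_bwdLinearMap : ⇑T.bwdLinearMap = T.bwd := rfl

end BackwardShift

section BackwardShiftOnLp

variable {T} {p : ℝ≥0∞} [Fact (1 ≤ p)]
  (hb : BoundedOn (fun _ => 1) p.toReal T.bwdLinearMap) (hp : 0 < p.toReal)

theorem toCLM_pow_lpSingle {n : ℕ} {u w : V} (hw : w ∈ T.childN n u) (a : ℂ) :
    (hb.toCLM hp ^ n) (lp.single p w a) = lp.single p u a :=
  lp.ext <| (hb.coe_toCLM_pow hp n _).trans (T.bwd_iterate_single hw a)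

theorem toCLM_pow_lpAverage_childFinset (hleafless : ∀ u : V, ¬ T.IsLeaf u) (n : ℕ) (u : V)
    (a : ℂ) : (hb.toCLM hp ^ n) (lpAverage p (T.childFinset n u) a) = lp.single p u a := by
  have hcard : (#(T.childFinset n u) : ℝ) ≠ 0 := by
    obtain ⟨w, hw⟩ := childN_nonempty hleafless n u
    exact_mod_cast Finset.card_ne_zero_of_mem (T.mem_childFinset.2 hw)
  have hsum : ∑ w ∈ T.childFinset n u, (hb.toCLM hp ^ n) (lp.single p w a) =
      (#(T.childFinset n u) : ℝ) • lp.single p u a := by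
    rw [Finset.sum_congr rfl fun w hw => toCLM_pow_lpSingle hb hp (T.mem_childFinset.1 hw) a,
      Finset.sum_const, Nat.cast_smul_eq_nsmul]
  rw [lpAverage, ContinuousLinearMap.map_smul_of_tower, map_sum, hsum, inv_smul_smul₀ hcard]

theorem tendsto_toCLM_pow_lpSingle_zero (hroot : ∃ r : V, T.IsRoot r) (v : V) (a : ℂ) :
    Tendsto (fun n => (hb.toCLM hp ^ n) (lp.single p v a)) atTop (𝓝 0) := by
  obtain ⟨r, hr⟩ := hroot
  obtain ⟨n, hv⟩ := T.exists_mem_childN_of_isRoot hr v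
  have hroot_zero : hb.toCLM hp (lp.single p r a) = 0 := lp.ext (T.bwd_single_of_isRoot hr a)
  refine tendsto_atTop_of_eventually_const (i₀ := n + 1) fun m hm => ?_
  obtain ⟨k, rfl⟩ := Nat.exists_eq_add_of_le' hm
  rw [pow_add, pow_succ', mul_apply_eq_comp, mul_apply_eq_comp,
    toCLM_pow_lpSingle hb hp hv, hroot_zero, map_zero]

theorem exists_denseRange_toCLM_pow [Countable V] (hleafless : ∀ u : V, ¬ T.IsLeaf u)
    (hroot : ∃ r : V, T.IsRoot r) (hfree : ¬ T.FreeEnd) (hp : 1 < p.toReal) :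
    ∃ x, DenseRange fun n : ℕ => (hb.toCLM (zero_lt_one.trans hp) ^ n) x := by
  have hp_pos : 0 < p.toReal := zero_lt_one.trans hp
  have hp_top : p ≠ ⊤ := (ENNReal.toReal_pos_iff_ne_top p).1 hp_pos
  have := separableSpace_lp (E := fun _ : V => ℂ) hp_top
  have := UniformSpace.secondCountable_of_separable (lp (fun _ : V => ℂ) p)
  have hdense := dense_span_iUnion_range_lpSingle (E := fun _ : V => ℂ) ℂ hp_top
  refine exists_denseRange_of_tendsto_zero (l := atTop) hdense hdense ?_ ?_ <;>
    simp only [mem_iUnion, mem_range] <;> rintro _ ⟨v, a, rfl⟩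
  · exact tendsto_toCLM_pow_lpSingle_zero hb hp_pos hroot v a
  · refine ⟨fun n => lpAverage p (T.childFinset n v) a,
      tendsto_lpAverage_zero hp (tendsto_card_childFinset_atTop hleafless hfree v) a, ?_⟩
    simp only [toCLM_pow_lpAverage_childFinset hb hp_pos hleafless]
    exact tendsto_const_nhds

end BackwardShiftOnLp

end DirTree

/-- For a leafless rooted directed tree, `1 < q < ∞`, constant
weights `λ_v = 1`, and bounded backward shift `B` on `L^q`: if the tree has no
free end, then `B` is hypercyclic. -/
theorem stmt_10 {V : Type} [Countable V] [Infinite V] (T : DirTree V)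
    (hleafless : ∀ u : V, ¬ T.IsLeaf u) (hroot : ∃ r : V, T.IsRoot r)
    (q : ℝ) (hq : 1 < q)
    (hb : BoundedOn (fun _ : V => (1 : ℝ)) q T.bwd)
    (hfe : ¬ T.FreeEnd) :
    Hypercyclic (fun _ : V => (1 : ℝ)) q T.bwd := by
  obtain ⟨p, hp, rfl⟩ : ∃ p : ℝ≥0∞, 1 ≤ p ∧ p.toReal = q :=
    ⟨.ofReal q, by simpa using hq.le, ENNReal.toReal_ofReal (by linarith)⟩
  have : Fact (1 ≤ p) := ⟨hp⟩
  rw [← T.coe_bwdLinearMap] at hb ⊢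
  obtain ⟨x, hx⟩ := DirTree.exists_denseRange_toCLM_pow hb hleafless hroot hfe hq
  exact BoundedOn.hypercyclic_of_denseRange hx
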